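/- For n ≥ 3, let E_n be the digraph on vertices {1, …, n} defined by: for i, j < n, (i,j) ∈ E(E_n) iff i = j; (i,n) ∈ E(E_n) and (n,i) ∈ E(E_n) for all i < n; and (n,n) ∉ E(E_n) (adjacency matrix [[I, Y],[Yᵀ, 0]] with I the (n−1)×(n−1) identity and Y a column of n−1 ones). Then the leafage satisfies l(E_n) = n, while f*(E_n) = f(E_n) = 3. -/

import Mathlib

/-- A subtree representation of a digraph with edge relation `E` on vertex type `V`
in a host graph `T` on vertex type `W`: each digraph vertex `v` gets a source set
`src v` and a sink set `snk v`, each inducing a connected (hence nonempty) subgraph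
of `T`, such that `E u v` holds iff `src u` meets `snk v`. -/
structure SubtreeRep {V W : Type} (E : V → V → Prop) (T : SimpleGraph W) where
  src : V → Set W
  snk : V → Set W
  src_connected : ∀ v, (T.induce (src v)).Connected
  snk_connected : ∀ v, (T.induce (snk v)).Connected
  rep : ∀ u v, E u v ↔ (src u ∩ snk v).Nonempty

/-- The set of leaves (vertices of degree 1) of a graph. -/
def treeLeaves {W : Type} (T : SimpleGraph W) : Set W :=
  {w | (T.neighborSet w).ncard = 1}

/-- The leafage of a digraph: the minimum number of leaves of a finite host tree in
which the digraph has a subtree representation. -/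
noncomputable def digLeafage {V : Type} (E : V → V → Prop) : ℕ :=
  sInf {k | ∃ (W : Type) (_ : Fintype W) (T : SimpleGraph W),
    T.IsTree ∧ Nonempty (SubtreeRep E T) ∧ (treeLeaves T).ncard = k}

/-- The catch leafage of a digraph: the minimum number of leaves of a finite host tree
in which the digraph has a subtree representation all of whose sink sets are single
vertices. -/
noncomputable def catchLeafage {V : Type} (E : V → V → Prop) : ℕ :=
  sInf {k | ∃ (W : Type) (_ : Fintype W) (T : SimpleGraph W) (R : SubtreeRep E T),
    T.IsTree ∧ (∀ v, ∃ x, R.snk v = {x}) ∧ (treeLeaves T).ncard = k}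

/-- `C` is between `A` and `B` in `T`: `A` and `B` are disjoint and the unique path of
`T` from `A` to `B` (i.e. the path meeting `A` only at its first vertex and `B` only
at its last vertex) contains a vertex of `C` (possibly an endpoint). -/
def Between {W : Type} (T : SimpleGraph W) (A B C : Set W) : Prop :=
  A ∩ B = ∅ ∧ ∃ (a b : W) (p : T.Walk a b), a ∈ A ∧ b ∈ B ∧ p.IsPath ∧
    (∀ x ∈ p.support, x ∈ A → x = a) ∧ (∀ x ∈ p.support, x ∈ B → x = b) ∧
    ∃ x ∈ C, x ∈ p.support

/-- An asteroidal collection of sets in `T`: pairwise disjoint, and no member is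
between two other members. -/
def Asteroidal {W ι : Type} (T : SimpleGraph W) (F : ι → Set W) : Prop :=
  (∀ i j, i ≠ j → F i ∩ F j = ∅) ∧
  ∀ i j k, i ≠ j → i ≠ k → j ≠ k → ¬ Between T (F i) (F j) (F k)

/-- The star `K_{1,n}`: the center `none` is adjacent to the `n` leaves `some i`. -/
def starGraph (n : ℕ) : SimpleGraph (Option (Fin n)) :=
  SimpleGraph.fromRel (fun a _ => a = none)

/-- A Ferrers digraph: the successor sets are linearly ordered by inclusion. -/
def IsFerrers {V : Type} (F : V → V → Prop) : Prop :=
  ∀ u u' : V, {v | F u v} ⊆ {v | F u' v} ∨ {v | F u' v} ⊆ {v | F u v}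

/-- The Ferrers dimension `f(D)`: the minimum number of Ferrers digraphs whose
intersection is `E`. -/
noncomputable def ferrersDim {V : Type} (E : V → V → Prop) : ℕ :=
  sInf {k | ∃ F : Fin k → V → V → Prop,
    (∀ i, IsFerrers (F i)) ∧ (∀ u v, E u v ↔ ∀ i, F i u v)}

/-- `f*(D)`: the minimum number of pairwise edge-disjoint Ferrers digraphs whose
union is the complement of `E` in `V × V`. -/
noncomputable def fstar {V : Type} (E : V → V → Prop) : ℕ :=
  sInf {k | ∃ F : Fin k → V → V → Prop,
    (∀ i, IsFerrers (F i)) ∧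
    (∀ i j, i ≠ j → ∀ u v, ¬ (F i u v ∧ F j u v)) ∧
    (∀ u v, ¬ E u v ↔ ∃ i, F i u v)}

/-- The width of the incidence poset `P(D)`: the maximum size of an antichain (under
inclusion) of predecessor sets of the digraph `E`. -/
noncomputable def incWidth {V : Type} (E : V → V → Prop) : ℕ :=
  sSup {k | ∃ A : Finset (Set V),
    (↑A : Set (Set V)) ⊆ Set.range (fun v => {u | E u v}) ∧
    IsAntichain (· ⊆ ·) (↑A : Set (Set V)) ∧ A.card = k}

/-- The digraph `D_n` with adjacency matrix `J - I`: all pairs of distinct vertices. -/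
def DnRel (n : ℕ) (i j : Fin n) : Prop := i ≠ j

/-- The digraph `E_n` with adjacency matrix `[[I, Y], [Yᵀ, 0]]` (vertex `n-1` playing
the role of the last row/column). -/
def EnRel (n : ℕ) (i j : Fin n) : Prop :=
  (i.val < n - 1 ∧ j.val < n - 1 ∧ i = j) ∨
  (i.val < n - 1 ∧ j.val = n - 1) ∨
  (i.val = n - 1 ∧ j.val < n - 1)

/-- The digraph `C_n`: a directed `n`-cycle plus a loop at each vertex. -/
def CnRel (n : ℕ) (i j : Fin n) : Prop := j = i ∨ j.val = (i.val + 1) % n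

/-- The digraph `M_{k,m}` on `Fin k × Fin m`: identity diagonal blocks, all-ones
blocks above the diagonal, all-zeros blocks below. -/
def MkmRel (k m : ℕ) (p q : Fin k × Fin m) : Prop :=
  p.1 < q.1 ∨ (p.1 = q.1 ∧ p.2 = q.2)

/-- The digraph `F_n` with adjacency matrix `[[I, Y], [Yᵀ, 1]]` (vertex `n-1` playing
the role of the last row/column). -/
def FnRel (n : ℕ) (i j : Fin n) : Prop := i = j ∨ i.val = n - 1 ∨ j.val = n - 1

/-- The digraph `P_n`: a directed path `1 → 2 → ⋯ → n` plus a loop at each vertex. -/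
def PnRel (n : ℕ) (i j : Fin n) : Prop := j = i ∨ j.val = i.val + 1

/-!
`E_n` is a star centred at `c` with a loop at every vertex but `c`.

For the leafage, fix a vertex `a ≠ c`. The trees `src a ∪ snk c`, `src c ∪ snk a` and
`src v ∪ snk v` for `v ≠ a, c` meet pairwise, so by the Helly property they share a vertex `w`; the
nonedges of `E_n` then force `w` to lie in every `src v` or in every `snk v`. Root the host tree at
`w`. The neighbourhoods in `E_n` form an antichain, which makes the vertices closest to `w` of the
`n` trees of the other kind pairwise incomparable, so that distinct leaves lie beyond them.

For the Ferrers dimensions, two nonedges `(u, v)` and `(u', v')` such that `(u, v')` and `(u', v)`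
are edges never belong to the same Ferrers digraph inside the complement, and `(a, b)`, `(b, a)`,
`(c, c)`, for distinct leaves `a` and `b`, are three such nonedges. Conversely the nonedges between
leaves above the diagonal, those below it and the missing loop form three Ferrers digraphs.
-/

section Geodesic

variable {W : Type*} {T : SimpleGraph W} {r x y z : W} {A : Set W}

/-- `y` lies on a shortest walk from `x` to `z`. With the first argument `x` fixed this is the
ancestor relation, between `y` and `z`, of the tree `T` rooted at `x`. -/
def GeodesicBtw (T : SimpleGraph W) (x y z : W) : Prop :=
  T.dist x y + T.dist y z = T.dist x z

lemma GeodesicBtw.trans (hT : T.Connected) (hxy : GeodesicBtw T r x y)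
    (hyz : GeodesicBtw T r y z) : GeodesicBtw T r x z := by
  have hrxz := hT.dist_triangle (u := r) (v := x) (w := z)
  have hxyz := hT.dist_triangle (u := x) (v := y) (w := z)
  unfold GeodesicBtw at *
  omega

lemma GeodesicBtw.cancel_left (hT : T.Connected) (hxy : GeodesicBtw T r x y)
    (hyz : GeodesicBtw T r y z) : GeodesicBtw T x y z := by
  have hrxz := hT.dist_triangle (u := r) (v := x) (w := z)
  have hxyz := hT.dist_triangle (u := x) (v := y) (w := z)
  unfold GeodesicBtw at *
  omega

lemma GeodesicBtw.cancel_right (hT : T.Connected) (hyz : GeodesicBtw T y x z)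
    (hrz : GeodesicBtw T r y z) : GeodesicBtw T r y x := by
  have hrxz := hT.dist_triangle (u := r) (v := x) (w := z)
  have hryx := hT.dist_triangle (u := r) (v := y) (w := x)
  unfold GeodesicBtw at *
  omega

lemma GeodesicBtw.eq_of_dist_le (hT : T.Connected) (h : GeodesicBtw T r x y)
    (hdist : T.dist r y ≤ T.dist r x) : x = y := by
  unfold GeodesicBtw at h
  exact hT.dist_eq_zero_iff.1 (by omega)

lemma length_eq_dist_of_isPath (hT : T.IsTree) {p : T.Walk x z}
    (hp : p.IsPath) : p.length = T.dist x z := by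
  obtain ⟨q, hq, hlength⟩ := hT.connected.exists_path_of_dist x z
  rw [(hT.existsUnique_path x z).unique hp hq, hlength]

lemma mem_support_iff_geodesicBtw (hT : T.IsTree) {p : T.Walk x z} (hp : p.IsPath) :
    y ∈ p.support ↔ GeodesicBtw T x y z := by
  constructor
  · intro hy
    obtain ⟨q, s, rfl⟩ := SimpleGraph.Walk.mem_support_iff_exists_append.1 hy
    rw [GeodesicBtw, ← length_eq_dist_of_isPath hT hp, SimpleGraph.Walk.length_append,
      length_eq_dist_of_isPath hT hp.of_append_left, length_eq_dist_of_isPath hT hp.of_append_right]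
  · intro hy
    obtain ⟨q, hq⟩ := hT.connected.exists_walk_length_eq_dist x y
    obtain ⟨s, hs⟩ := hT.connected.exists_walk_length_eq_dist y z
    have hqs : (q.append s).IsPath := SimpleGraph.Walk.isPath_of_length_eq_dist _ <| by
      rw [SimpleGraph.Walk.length_append, hq, hs, hy]
    rw [(hT.existsUnique_path x z).unique hp hqs]
    exact SimpleGraph.Walk.mem_support_iff_exists_append.2 ⟨q, s, rfl⟩

lemma GeodesicBtw.mem_of_connected (hT : T.IsTree) (hA : (T.induce A).Connected) (hx : x ∈ A)
    (hz : z ∈ A) (h : GeodesicBtw T x y z) : y ∈ A := by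
  obtain ⟨p, hp⟩ := hA.exists_isPath ⟨x, hx⟩ ⟨z, hz⟩
  have hy := (mem_support_iff_geodesicBtw hT
    (hp.map (f := (SimpleGraph.Embedding.induce A).toHom) Subtype.val_injective)).2 h
  rw [SimpleGraph.Walk.support_map] at hy
  obtain ⟨v, -, rfl⟩ := List.mem_map.1 hy
  exact v.2

lemma GeodesicBtw.total (hT : T.IsTree) (hx : GeodesicBtw T r x z) (hy : GeodesicBtw T r y z) :
    GeodesicBtw T r x y ∨ GeodesicBtw T r y x := by
  obtain ⟨p, hp⟩ := hT.connected.exists_isPath r z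
  obtain ⟨q, s, rfl⟩ := SimpleGraph.Walk.mem_support_iff_exists_append.1
    ((mem_support_iff_geodesicBtw hT hp).2 hy)
  rcases (SimpleGraph.Walk.mem_support_append_iff q s).1
    ((mem_support_iff_geodesicBtw hT hp).2 hx) with hxq | hxs
  · exact Or.inl ((mem_support_iff_geodesicBtw hT hp.of_append_left).1 hxq)
  · exact Or.inr
      (((mem_support_iff_geodesicBtw hT hp.of_append_right).1 hxs).cancel_right hT.connected hy)

lemma geodesicBtw_or_of_adj (hT : T.IsTree) (r : W) (h : T.Adj x y) :
    GeodesicBtw T r x y ∨ GeodesicBtw T r y x := by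
  have hxy : T.dist x y = 1 := SimpleGraph.dist_eq_one_iff_adj.2 h
  have hyx : T.dist y x = 1 := SimpleGraph.dist_eq_one_iff_adj.2 h.symm
  unfold GeodesicBtw
  rcases hT.dist_eq_dist_add_one_of_adj r h <;> omega

lemma exists_mem_forall_geodesicBtw (hT : T.IsTree) (r : W) (hA : (T.induce A).Connected) :
    ∃ g ∈ A, ∀ y ∈ A, GeodesicBtw T r g y := by
  obtain ⟨g, hg⟩ := exists_minimalFor_of_wellFoundedLT (· ∈ A) (T.dist r)
    (Set.nonempty_coe_sort.1 hA.nonempty)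
  have hmin : ∀ y ∈ A, T.dist r g ≤ T.dist r y := fun y hy =>
    (le_total _ _).elim id (hg.2 hy)
  suffices hreach : ∀ y : A, Relation.ReflTransGen (T.induce A).Adj ⟨g, hg.1⟩ y →
      GeodesicBtw T r g y from ⟨g, hg.1, fun y hy => hreach ⟨y, hy⟩ <|
    (SimpleGraph.reachable_iff_reflTransGen _ _).1 (hA.preconnected _ _)⟩
  intro y hy
  induction hy with
  | refl => simp [GeodesicBtw]
  | @tail _ z _ hyz hgy =>
    rcases geodesicBtw_or_of_adj hT r hyz with hyz | hzy
    · exact hgy.trans hT.connected hyz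
    · refine (hgy.total hT hzy).elim id fun hzg => ?_
      have hz : (z : W) = g := hzg.eq_of_dist_le hT.connected (hmin z z.2)
      simp [GeodesicBtw, hz]

/-- Of the vertices of the `A i` nearest to `r`, the one farthest from `r` is common to all. -/
theorem iInter_nonempty_of_pairwise_inter_nonempty [Finite W] (hT : T.IsTree) {ι : Type*}
    [Nonempty ι] {A : ι → Set W} (hA : ∀ i, (T.induce (A i)).Connected)
    (hmeet : Pairwise fun i j => (A i ∩ A j).Nonempty) : (⋂ i, A i).Nonempty := by
  obtain ⟨r⟩ := hT.connected.nonempty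
  choose g hgA hg using fun i => exists_mem_forall_geodesicBtw hT r (hA i)
  obtain ⟨_, ⟨i, rfl⟩, hmax⟩ := (Set.toFinite (Set.range g)).exists_maximalFor (T.dist r) _
    (Set.range_nonempty g)
  have hdist : ∀ j, T.dist r (g j) ≤ T.dist r (g i) := fun j =>
    (le_total _ _).elim id (hmax ⟨j, rfl⟩)
  refine ⟨g i, Set.mem_iInter.2 fun j => ?_⟩
  rcases eq_or_ne i j with rfl | hij
  · exact hgA i
  obtain ⟨z, hzi, hzj⟩ := hmeet hij
  rcases (hg i z hzi).total hT (hg j z hzj) with h | h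
  · rw [h.eq_of_dist_le hT.connected (hdist j)]
    exact hgA j
  · exact (h.cancel_left hT.connected (hg i z hzi)).mem_of_connected hT (hA j) (hgA j) hzj

lemma inter_nonempty_or_of_cyclic_inter_nonempty [Finite W] (hT : T.IsTree) {A B C D : Set W}
    (hA : (T.induce A).Connected) (hB : (T.induce B).Connected) (hC : (T.induce C).Connected)
    (hD : (T.induce D).Connected) (hAB : (A ∩ B).Nonempty) (hBC : (B ∩ C).Nonempty)
    (hCD : (C ∩ D).Nonempty) (hDA : (D ∩ A).Nonempty) :
    (A ∩ C).Nonempty ∨ (B ∩ D).Nonempty := by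
  have hconn : ∀ i : Fin 3, (T.induce (![A ∪ B, C, D] i)).Connected := by
    simp only [Fin.forall_fin_succ]
    exact ⟨SimpleGraph.induce_union_connected hA.preconnected hB.preconnected hAB, hC, hD, nofun⟩
  have hmeet : Pairwise fun i j : Fin 3 => (![A ∪ B, C, D] i ∩ ![A ∪ B, C, D] j).Nonempty := by
    have h01 : ((A ∪ B) ∩ C).Nonempty := hBC.mono (by grind)
    have h02 : ((A ∪ B) ∩ D).Nonempty := hDA.mono (by grind)
    intro i j hij
    fin_cases i <;> fin_cases j <;> simp_all [Set.inter_comm]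
  obtain ⟨w, hw⟩ := iInter_nonempty_of_pairwise_inter_nonempty hT hconn hmeet
  simp only [Set.mem_iInter, Fin.forall_fin_succ] at hw
  obtain ⟨hwA | hwB, hwC, hwD, -⟩ := hw
  · exact Or.inl ⟨w, hwA, hwC⟩
  · exact Or.inr ⟨w, hwB, hwD⟩

end Geodesic

section Leaves

variable {W : Type} {T : SimpleGraph W} {r x : W}

lemma exists_mem_treeLeaves_geodesicBtw [Finite W] (hT : T.IsTree) (hx : x ≠ r) :
    ∃ l ∈ treeLeaves T, GeodesicBtw T r x l := by
  obtain ⟨l, hxl, hmax⟩ := (Set.toFinite {y | GeodesicBtw T r x y}).exists_maximalFor (T.dist r) _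
    ⟨x, by simp [GeodesicBtw]⟩
  have hlr : l ≠ r := by
    rintro rfl
    exact hx (hxl.eq_of_dist_le hT.connected (by simp))
  have hparent : ∀ y, T.Adj l y → GeodesicBtw T r y l := fun y hly =>
    (geodesicBtw_or_of_adj hT r hly).resolve_left fun h => hly.ne <|
      h.eq_of_dist_le hT.connected <|
        (le_total _ _).elim (hmax (hxl.trans hT.connected h)) id
  have hunique : ∀ y z, T.Adj l y → T.Adj l z → y = z := by
    intro y z hly hlz
    have hy := hparent y hly
    have hz := hparent z hlz
    have hdist : T.dist r y = T.dist r z := by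
      rw [GeodesicBtw, SimpleGraph.dist_eq_one_iff_adj.2 hly.symm] at hy
      rw [GeodesicBtw, SimpleGraph.dist_eq_one_iff_adj.2 hlz.symm] at hz
      omega
    rcases hy.total hT hz with h | h
    · exact h.eq_of_dist_le hT.connected hdist.ge
    · exact (h.eq_of_dist_le hT.connected hdist.le).symm
  have : Nontrivial W := ⟨l, r, hlr⟩
  obtain ⟨y, hly⟩ := hT.connected.preconnected.exists_adj_of_nontrivial l
  exact ⟨l, Set.ncard_eq_one.2 ⟨y, Set.eq_singleton_iff_unique_mem.2
    ⟨hly, fun z hlz => hunique z y hlz hly⟩⟩, hxl⟩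

/-- Seen from `r`, the nearest vertices of the `A i` are pairwise incomparable, so the leaves
beyond them are distinct. -/
theorem card_le_ncard_treeLeaves [Finite W] (hT : T.IsTree) {ι κ : Type*} [Nontrivial ι]
    {A : ι → Set W} {B : κ → Set W} (hA : ∀ i, (T.induce (A i)).Connected)
    (hB : ∀ v, (T.induce (B v)).Connected) (hr : r ∈ ⋂ v, B v)
    (hanti : ∀ i j, i ≠ j → ∃ v, (A i ∩ B v).Nonempty ∧ ¬ (A j ∩ B v).Nonempty) :
    Nat.card ι ≤ (treeLeaves T).ncard := by
  rw [Set.mem_iInter] at hr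
  choose g hgA hg using fun i => exists_mem_forall_geodesicBtw hT r (hA i)
  have hincomp : ∀ i j, i ≠ j → ¬ GeodesicBtw T r (g j) (g i) := by
    rintro i j hij hji
    obtain ⟨v, ⟨y, hyA, hyB⟩, hjv⟩ := hanti i j hij
    have hgiB : g i ∈ B v := (hg i y hyA).mem_of_connected hT (hB v) (hr v) hyB
    exact hjv ⟨g j, hgA j, hji.mem_of_connected hT (hB v) (hr v) hgiB⟩
  have hroot : ∀ i, g i ≠ r := by
    intro i hgi
    obtain ⟨j, hji⟩ := exists_ne i
    exact hincomp j i hji (by simp [hgi, GeodesicBtw])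
  choose l hl hgl using fun i => exists_mem_treeLeaves_geodesicBtw hT (hroot i)
  have hinj : Function.Injective l := by
    intro i j hij
    by_contra hne
    exact ((hgl i).total hT (hij ▸ hgl j)).elim (hincomp j i (Ne.symm hne)) (hincomp i j hne)
  rw [← Set.ncard_range_of_injective hinj]
  exact Set.ncard_le_ncard (Set.range_subset_iff.2 hl)

lemma treeLeaves_starGraph (hr : ({r}ᶜ : Set W).ncard ≠ 1) :
    treeLeaves (SimpleGraph.starGraph r) = {r}ᶜ := by
  ext x
  rcases eq_or_ne x r with rfl | hx
  · have : (SimpleGraph.starGraph x).neighborSet x = {x}ᶜ := by ext; simp [eq_comm]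
    simpa [treeLeaves, this] using hr
  · have : (SimpleGraph.starGraph r).neighborSet x = {r} := by
      ext y
      simp only [SimpleGraph.mem_neighborSet, SimpleGraph.starGraph_adj, Set.mem_singleton_iff]
      grind
    simp [treeLeaves, this, hx]

lemma connected_induce_starGraph {A : Set W} (hr : r ∈ A) :
    ((SimpleGraph.starGraph r).induce A).Connected :=
  .of_isUniversal (v := ⟨r, hr⟩) fun x hx => by simpa [Subtype.ext_iff] using hx

end Leaves

section Ferrers

variable {V : Type} {E : V → V → Prop}

lemma IsFerrers.exchange {F : V → V → Prop} (hF : IsFerrers F) {u v u' v' : V} (h : F u v)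
    (h' : F u' v') : F u v' ∨ F u' v :=
  (hF u u').elim (fun hs => Or.inr (hs h)) (fun hs => Or.inl (hs h'))

lemma IsFerrers.compl {F : V → V → Prop} (hF : IsFerrers F) :
    IsFerrers fun u v => ¬ F u v :=
  fun u u' => (hF u u').symm.imp (fun h _ hv hv' => hv (h hv')) (fun h _ hv hv' => hv (h hv'))

/-- The nonedges `(u i, v i)` lie in distinct `F p`, as exchanging the ends of two of them gives
edges of `E`. -/
theorem card_le_of_isFerrers_cover_compl {ι κ : Type*} [Finite κ] {F : κ → V → V → Prop}
    (hF : ∀ p, IsFerrers (F p)) (hcover : ∀ x y, ¬ E x y ↔ ∃ p, F p x y) {u v : ι → V}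
    (huv : ∀ i j, E (u i) (v j) ↔ i ≠ j) : Nat.card ι ≤ Nat.card κ := by
  choose p hp using fun i => (hcover (u i) (v i)).1 (by simp [huv])
  refine Nat.card_le_card_of_injective p fun i j hij => ?_
  by_contra hne
  rcases (hF (p i)).exchange (hp i) (hij ▸ hp j) with h | h
  · exact (hcover _ _).2 ⟨_, h⟩ ((huv i j).2 hne)
  · exact (hcover _ _).2 ⟨_, h⟩ ((huv j i).2 (Ne.symm hne))

variable {k : ℕ} {F : Fin k → V → V → Prop} {u v : Fin k → V}

theorem fstar_eq_of_isFerrers_cover_compl (hF : ∀ p, IsFerrers (F p))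
    (hdisj : ∀ p q, p ≠ q → ∀ x y, ¬ (F p x y ∧ F q x y))
    (hcover : ∀ x y, ¬ E x y ↔ ∃ p, F p x y) (huv : ∀ i j, E (u i) (v j) ↔ i ≠ j) :
    fstar E = k := by
  refine IsLeast.csInf_eq ⟨⟨F, hF, hdisj, hcover⟩, ?_⟩
  rintro m ⟨G, hG, -, hGcover⟩
  simpa using card_le_of_isFerrers_cover_compl hG hGcover huv

theorem ferrersDim_eq_of_isFerrers_cover_compl (hF : ∀ p, IsFerrers (F p))
    (hcover : ∀ x y, ¬ E x y ↔ ∃ p, F p x y) (huv : ∀ i j, E (u i) (v j) ↔ i ≠ j) :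
    ferrersDim E = k := by
  refine IsLeast.csInf_eq ⟨⟨fun p x y => ¬ F p x y, fun p => (hF p).compl, fun x y => ?_⟩, ?_⟩
  · rw [← not_exists, ← hcover, not_not]
  · rintro m ⟨G, hG, hGinter⟩
    simpa using card_le_of_isFerrers_cover_compl (fun p => (hG p).compl)
      (fun x y => by rw [hGinter, not_forall]) huv

end Ferrers

section LeafLoopedStar

variable {V : Type} {c u v : V}

/-- The star centred at `c` with loops at the leaves only, as a symmetric digraph: the digraph
`E_n` on an arbitrary vertex type. -/
def LeafLoopedStar (c u v : V) : Prop :=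
  (u = c ∨ v = c ∨ u = v) ∧ ¬ (u = c ∧ v = c)

lemma enRel_succ (m : ℕ) : EnRel (m + 1) = LeafLoopedStar (Fin.last m) := by
  funext i j
  simp only [EnRel, LeafLoopedStar, Fin.ext_iff, Fin.val_last, eq_iff_iff]
  omega

lemma leafLoopedStar_comm : LeafLoopedStar c u v ↔ LeafLoopedStar c v u := by
  grind [LeafLoopedStar]

lemma exists_leafLoopedStar_not_leafLoopedStar (hV : 3 ≤ ENat.card V) (c : V) (huv : u ≠ v) :
    ∃ x, LeafLoopedStar c u x ∧ ¬ LeafLoopedStar c v x := by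
  by_cases hu : u = c
  · obtain ⟨x, hxv, hxc⟩ := ENat.exists_ne_ne_of_three_le hV v c
    exact ⟨x, by grind [LeafLoopedStar]⟩
  by_cases hv : v = c
  · exact ⟨c, by grind [LeafLoopedStar]⟩
  · exact ⟨u, by grind [LeafLoopedStar]⟩

section Leafage

variable {W : Type} [Finite W] {T : SimpleGraph W}

lemma src_union_snk_inter_nonempty (hT : T.IsTree) (R : SubtreeRep (LeafLoopedStar c) T)
    (hu : u ≠ c) (hv : v ≠ c) :
    ((R.src u ∪ R.snk u) ∩ (R.src v ∪ R.snk v)).Nonempty := by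
  have hconn : ∀ x, x ≠ c → (T.induce (R.src x ∪ R.snk x)).Connected := fun x hx =>
    SimpleGraph.induce_union_connected (R.src_connected x).preconnected
      (R.snk_connected x).preconnected ((R.rep x x).1 (by grind [LeafLoopedStar]))
  have hsrc : ∀ x, x ≠ c → ((R.src x ∪ R.snk x) ∩ R.src c).Nonempty := fun x hx =>
    ((R.rep c x).1 (by grind [LeafLoopedStar])).mono (by grind)
  have hsnk : ∀ x, x ≠ c → ((R.src x ∪ R.snk x) ∩ R.snk c).Nonempty := fun x hx =>
    ((R.rep x c).1 (by grind [LeafLoopedStar])).mono (by grind)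
  have hcc : ¬ (R.src c ∩ R.snk c).Nonempty := by
    rw [← R.rep]
    grind [LeafLoopedStar]
  exact (inter_nonempty_or_of_cyclic_inter_nonempty hT (hconn u hu) (R.src_connected c)
    (hconn v hv) (R.snk_connected c) (hsrc u hu) (Set.inter_comm _ _ ▸ hsrc v hv) (hsnk v hv)
    (Set.inter_comm _ _ ▸ hsnk u hu)).resolve_right hcc

lemma exists_forall_mem_src_or_mem_snk_swap [DecidableEq V] (hT : T.IsTree)
    (R : SubtreeRep (LeafLoopedStar c) T) {a : V} (hac : a ≠ c) :
    ∃ w, ∀ v, w ∈ R.src v ∨ w ∈ R.snk (Equiv.swap a c v) := by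
  let A : V → Set W := fun v => R.src v ∪ R.snk (Equiv.swap a c v)
  have hmeet : ∀ i j, LeafLoopedStar c i (Equiv.swap a c j) → (A i ∩ A j).Nonempty := fun i j h =>
    ((R.rep _ _).1 h).mono (by grind)
  have hconn : ∀ i, (T.induce (A i)).Connected := fun i =>
    SimpleGraph.induce_union_connected (R.src_connected _).preconnected
      (R.snk_connected _).preconnected ((R.rep _ _).1 (by grind [LeafLoopedStar]))
  have hpair : Pairwise fun i j => (A i ∩ A j).Nonempty := by
    intro i j hij
    by_cases hrel : LeafLoopedStar c i (Equiv.swap a c j)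
    · exact hmeet i j hrel
    by_cases hrel' : LeafLoopedStar c j (Equiv.swap a c i)
    · exact Set.inter_comm _ _ ▸ hmeet j i hrel'
    obtain ⟨hia, hic, hja, hjc⟩ : i ≠ a ∧ i ≠ c ∧ j ≠ a ∧ j ≠ c := by grind [LeafLoopedStar]
    simpa only [A, Equiv.swap_apply_of_ne_of_ne hia hic, Equiv.swap_apply_of_ne_of_ne hja hjc]
      using src_union_snk_inter_nonempty hT R hic hjc
  have : Nonempty V := ⟨c⟩
  obtain ⟨w, hw⟩ := iInter_nonempty_of_pairwise_inter_nonempty hT hconn hpair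
  exact ⟨w, Set.mem_iInter.1 hw⟩

theorem iInter_src_or_snk_nonempty (hV : 3 ≤ ENat.card V) (hT : T.IsTree)
    (R : SubtreeRep (LeafLoopedStar c) T) :
    (⋂ v, R.src v).Nonempty ∨ (⋂ v, R.snk v).Nonempty := by
  classical
  obtain ⟨a, hac, -⟩ := ENat.exists_ne_ne_of_three_le hV c c
  obtain ⟨b, hbc, hba⟩ := ENat.exists_ne_ne_of_three_le hV c a
  obtain ⟨w, hw⟩ := exists_forall_mem_src_or_mem_snk_swap hT R hac
  have hnot : ∀ u v, ¬ LeafLoopedStar c u v → w ∈ R.src u → w ∉ R.snk v := fun u v h hu hv =>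
    h ((R.rep u v).2 ⟨w, hu, hv⟩)
  have ha : w ∈ R.src a ∨ w ∈ R.snk c := by simpa using hw a
  have hc : w ∈ R.src c ∨ w ∈ R.snk a := by simpa using hw c
  have hcc := hnot c c (by grind [LeafLoopedStar])
  have hother : ∀ v, v ≠ a → v ≠ c → w ∈ R.src v ∨ w ∈ R.snk v := fun v hva hvc => by
    simpa [Equiv.swap_apply_of_ne_of_ne hva hvc] using hw v
  have hdisj : ∀ u v, u ≠ c → v ≠ c → u ≠ v → w ∈ R.src u → w ∉ R.snk v := fun u v hu hv huv =>
    hnot u v (by grind [LeafLoopedStar])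
  rcases hother b hba hbc with hb | hb
  · have hsc : w ∈ R.src c := hc.resolve_right (hdisj b a hbc hac hba hb)
    have hsa : w ∈ R.src a := ha.resolve_right (hcc hsc)
    have hsv : ∀ v, v ≠ a → v ≠ c → w ∈ R.src v := fun v hva hvc =>
      (hother v hva hvc).resolve_right (hdisj a v hac hvc hva.symm hsa)
    exact Or.inl ⟨w, Set.mem_iInter.2 fun v => by grind⟩
  · have hkc : w ∈ R.snk c := ha.resolve_left fun hsa => hdisj a b hac hbc hba.symm hsa hb
    have hka : w ∈ R.snk a := hc.resolve_left fun hsc => hcc hsc hkc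
    have hkv : ∀ v, v ≠ a → v ≠ c → w ∈ R.snk v := fun v hva hvc =>
      (hother v hva hvc).resolve_left fun hsv => hdisj v a hvc hac hva hsv hka
    exact Or.inr ⟨w, Set.mem_iInter.2 fun v => by grind⟩

theorem card_le_ncard_treeLeaves_of_subtreeRep (hV : 3 ≤ ENat.card V) (hT : T.IsTree)
    (R : SubtreeRep (LeafLoopedStar c) T) : Nat.card V ≤ (treeLeaves T).ncard := by
  obtain ⟨a, hac, -⟩ := ENat.exists_ne_ne_of_three_le hV c c
  have : Nontrivial V := ⟨a, c, hac⟩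
  rcases iInter_src_or_snk_nonempty hV hT R with ⟨w, hw⟩ | ⟨w, hw⟩
  · refine card_le_ncard_treeLeaves hT R.snk_connected R.src_connected hw fun u v huv => ?_
    simp only [Set.inter_comm (R.snk _), ← R.rep, leafLoopedStar_comm (v := u),
      leafLoopedStar_comm (v := v)]
    exact exists_leafLoopedStar_not_leafLoopedStar hV c huv
  · refine card_le_ncard_treeLeaves hT R.src_connected R.snk_connected hw fun u v huv => ?_
    simp only [← R.rep]
    exact exists_leafLoopedStar_not_leafLoopedStar hV c huv

end Leafage

open Classical in
/-- A subtree representation in the star with one leaf for each vertex and the centre `none`. -/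
def starSubtreeRep (c : V) :
    SubtreeRep (LeafLoopedStar c) (SimpleGraph.starGraph (none : Option V)) where
  src v := if v = c then {some c}ᶜ else {none, some v, some c}
  snk v := {some v}
  src_connected v := by
    apply connected_induce_starGraph
    split_ifs <;> simp
  snk_connected v := by
    rw [SimpleGraph.induce_singleton_eq_top]
    exact SimpleGraph.connected_top
  rep u v := by
    rw [Set.inter_singleton_nonempty]
    grind [LeafLoopedStar]

theorem digLeafage_leafLoopedStar [Finite V] (hV : 3 ≤ ENat.card V) (c : V) :
    digLeafage (LeafLoopedStar c) = Nat.card V := by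
  have hcompl : ({none}ᶜ : Set (Option V)).ncard = Nat.card V := by
    rw [(Set.isCompl_range_some_none V).symm.compl_eq,
      Set.ncard_range_of_injective (Option.some_injective V)]
  refine IsLeast.csInf_eq ⟨⟨Option V, Fintype.ofFinite _, _, SimpleGraph.isTree_starGraph none,
    ⟨starSubtreeRep c⟩, ?_⟩, ?_⟩
  · have hcard : 3 ≤ Nat.card V := by simpa [ENat.card_eq_coe_natCard] using hV
    rw [treeLeaves_starGraph (by omega), hcompl]
  · rintro _ ⟨W, _, T, hT, ⟨R⟩, rfl⟩
    exact card_le_ncard_treeLeaves_of_subtreeRep hV hT R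

/-- The nonedges of `LeafLoopedStar c` split into three disjoint Ferrers digraphs: those above the
diagonal for a linear order on the vertices, those below it, and the loop at `c`. -/
def starNonedges [LinearOrder V] (c : V) : Fin 3 → V → V → Prop
  | 0, u, v => u < v ∧ u ≠ c ∧ v ≠ c
  | 1, u, v => v < u ∧ u ≠ c ∧ v ≠ c
  | 2, u, v => u = c ∧ v = c

section StarNonedges

variable [LinearOrder V]

lemma isFerrers_starNonedges (c : V) (p : Fin 3) : IsFerrers (starNonedges c p) := by
  intro u u'
  simp only [Set.subset_def, Set.mem_ofPred_eq]
  match p with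
  | 0 => simp only [starNonedges]; grind
  | 1 => simp only [starNonedges]; grind
  | 2 => simp only [starNonedges]; grind

lemma starNonedges_disjoint (c : V) (p q : Fin 3) (hpq : p ≠ q) (u v : V) :
    ¬ (starNonedges c p u v ∧ starNonedges c q u v) := by
  fin_cases p <;> fin_cases q <;> grind [starNonedges]

lemma not_leafLoopedStar_iff_exists_starNonedges (c u v : V) :
    ¬ LeafLoopedStar c u v ↔ ∃ p, starNonedges c p u v := by
  simp only [Fin.exists_fin_succ, Fin.exists_fin_zero, Fin.succ_zero_eq_one, Fin.succ_one_eq_two,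
    starNonedges]
  grind [LeafLoopedStar]

end StarNonedges

lemma exists_forall_leafLoopedStar_iff_ne (hV : 3 ≤ ENat.card V) (c : V) :
    ∃ u v : Fin 3 → V, ∀ i j, LeafLoopedStar c (u i) (v j) ↔ i ≠ j := by
  obtain ⟨a, hac, -⟩ := ENat.exists_ne_ne_of_three_le hV c c
  obtain ⟨b, hbc, hba⟩ := ENat.exists_ne_ne_of_three_le hV c a
  refine ⟨![a, b, c], ![b, a, c], fun i j => ?_⟩
  fin_cases i <;> fin_cases j <;> simp [LeafLoopedStar, hac, hbc, hba, hba.symm]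

theorem fstar_leafLoopedStar (hV : 3 ≤ ENat.card V) (c : V) : fstar (LeafLoopedStar c) = 3 := by
  obtain ⟨_, -⟩ := exists_wellFoundedLT V
  obtain ⟨u, v, huv⟩ := exists_forall_leafLoopedStar_iff_ne hV c
  exact fstar_eq_of_isFerrers_cover_compl (isFerrers_starNonedges c) (starNonedges_disjoint c)
    (not_leafLoopedStar_iff_exists_starNonedges c) huv

theorem ferrersDim_leafLoopedStar (hV : 3 ≤ ENat.card V) (c : V) :
    ferrersDim (LeafLoopedStar c) = 3 := by
  obtain ⟨_, -⟩ := exists_wellFoundedLT V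
  obtain ⟨u, v, huv⟩ := exists_forall_leafLoopedStar_iff_ne hV c
  exact ferrersDim_eq_of_isFerrers_cover_compl (isFerrers_starNonedges c)
    (not_leafLoopedStar_iff_exists_starNonedges c) huv

end LeafLoopedStar

/-- For `n ≥ 3`, the digraph `E_n` with adjacency matrix
`[[I, Y], [Yᵀ, 0]]` satisfies `l(E_n) = n` and `f*(E_n) = f(E_n) = 3`. -/
theorem stmt_7 (n : ℕ) (hn : 3 ≤ n) :
    digLeafage (EnRel n) = n ∧ fstar (EnRel n) = 3 ∧ ferrersDim (EnRel n) = 3 := by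
  obtain ⟨m, rfl⟩ : ∃ m, n = m + 1 := ⟨n - 1, by omega⟩
  have hV : 3 ≤ ENat.card (Fin (m + 1)) := by
    rw [ENat.card_eq_coe_natCard, Nat.card_fin]
    exact_mod_cast hn
  rw [enRel_succ]
  refine ⟨?_, fstar_leafLoopedStar hV _, ferrersDim_leafLoopedStar hV _⟩
  rw [digLeafage_leafLoopedStar hV, Nat.card_fin]
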